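/- arXiv:1906.04417 — 2 statements merged into one kernel-verified Lean document; each statement's English description precedes it below -/
import Mathlib

section
/- Let f_1, ..., f_n ∈ L^1([0,1]; ℝ). Then there exist points 0 = t_0 ≤ t_1 ≤ ... ≤ t_{n+1} = 1 such that the function h : [0,1] → {−1, +1} defined by h(x) = (−1)^k for x ∈ [t_k, t_{k+1}) (and h(1) = (−1)^n) satisfies ∫_0^1 f_j(x) h(x) dx = 0 for all j = 1, ..., n. (Hobby–Rice theorem: h takes values ±1 and has at most n sign changes.) -/
open MeasureTheory

/-!
Discretising `[0, 1]` into `M + 1` small intervals, one looks for signs of these intervals with at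
most `n` changes that make all `n` signed sums small; uniform continuity of the primitives and
compactness of the space of partitions then give an exact solution.

If no such signs existed, every nonzero sign vector `x ∈ {-1, 0, 1} ^ (M + 1)` would get a rank
below `M` and an antipodal sign. If the zeros of `x` can be filled in with more than `n` sign
changes, the rank is the largest possible number of changes minus one, and the sign is the leading
one. Otherwise `x` has at most `2 * n` zeros, so some signed sum of `x` is large enough for its sign
not to depend on the filling; the first such sum yields the rank and the sign. The rank does not
increase when zeros are filled in, and the sign changes only if the rank drops. But for any
antipodal sign assignment, counting alternating flags modulo 2, one dimension of the cross-polytope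
at a time, produces a chain of `M + 1` sign vectors along which the sign alternates, and so the rank
drops `M` times.
-/

section Alternation

/-- The mod 2 indicator of the colour sequence `p` being the alternating one that starts
with `b`: each factor is the indicator of `p i = b + i`. -/
def alternation {k : ℕ} (b : ZMod 2) (p : Fin k → ZMod 2) : ZMod 2 :=
  ∏ i : Fin k, (p i + b + (i : ℕ) + 1)

variable {k : ℕ} (b : ZMod 2)

lemma alternation_succ (p : Fin (k + 1) → ZMod 2) :
    alternation b p = (p 0 + b + 1) * alternation (b + 1) (Fin.tail p) := by
  simp only [alternation, Fin.prod_univ_succ, Fin.tail, Fin.val_zero, Fin.val_succ, Nat.cast_zero,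
    Nat.cast_succ, add_zero]
  congr! 3
  ring

lemma alternation_add_one (p : Fin k → ZMod 2) :
    alternation b (fun i => p i + 1) = alternation (b + 1) p := by
  simp only [alternation]
  congr! 3
  ring

lemma alternation_ne_zero_iff {p : Fin k → ZMod 2} :
    alternation b p ≠ 0 ↔ ∀ i, p i = b + (i : ℕ) := by
  have factor_ne_zero : ∀ u w e : ZMod 2, u + w + e + 1 ≠ 0 ↔ u = w + e := by decide
  simp only [alternation, Finset.prod_ne_zero_iff, Finset.mem_univ, true_imp_iff, factor_ne_zero]

lemma sum_alternation_succAbove (p : Fin (k + 1) → ZMod 2) :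
    ∑ r, alternation b (p ∘ Fin.succAbove r) = alternation b p + alternation (b + 1) p := by
  have two_eq_zero : (2 : ZMod 2) = 0 := rfl
  induction k generalizing b with
  | zero =>
    have alternation_empty (b : ZMod 2) (q : Fin 0 → ZMod 2) : alternation b q = 1 := rfl
    simp only [alternation_succ, Fin.sum_univ_succ, alternation_empty, Fin.sum_univ_zero]
    linear_combination (-(p 0 + b) - 1) * two_eq_zero
  | succ k ih =>
    have erase_succ (r : Fin (k + 1)) : alternation b (p ∘ Fin.succAbove r.succ) =
        (p 0 + b + 1) * alternation (b + 1) (Fin.tail p ∘ Fin.succAbove r) := by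
      have tail_erase : Fin.tail (p ∘ Fin.succAbove r.succ) = Fin.tail p ∘ Fin.succAbove r :=
        funext fun q => congrArg p (Fin.succ_succAbove_succ r q)
      rw [alternation_succ, tail_erase]
      rfl
    have add_one_add_one : b + 1 + 1 = b := by linear_combination two_eq_zero
    have erase_zero : p ∘ Fin.succAbove 0 = Fin.tail p := rfl
    simp only [Fin.sum_univ_succ, erase_succ, ← Finset.mul_sum, ih, erase_zero,
      alternation_succ _ p, add_one_add_one]
    ring

end Alternation

/-- Vectors of signs; the nonzero ones are the faces of the `N`-dimensional cross-polytope. -/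
abbrev SignVector (N : ℕ) : Type := Fin N → SignType

/-- The face order of sign vectors: `y` is obtained from `x` by filling in some zeros. -/
def Conforms {N : ℕ} (x y : SignVector N) : Prop := ∀ i, x i = 0 ∨ x i = y i

section Conforms

variable {N : ℕ} {x y z : SignVector N}

lemma Conforms.trans (hxy : Conforms x y) (hyz : Conforms y z) : Conforms x z := by
  intro i
  rcases hxy i with hx | hx
  · exact .inl hx
  · exact hx ▸ hyz i

lemma Conforms.neg (hxy : Conforms x y) : Conforms (-x) (-y) :=
  fun i => (hxy i).imp (fun h => by simp [h]) (fun h => by simp [h])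

lemma Conforms.apply_eq (hxy : Conforms x y) {i : Fin N} (hi : x i ≠ 0) : y i = x i :=
  ((hxy i).resolve_left hi).symm

end Conforms

/-- A permutation giving the order in which the coordinates are filled in, with the signs they
receive: this encodes a maximal flag of faces of the cross-polytope. -/
abbrev SignedPerm (N : ℕ) : Type := Equiv.Perm (Fin N) × (Fin N → ℤˣ)

section SignedPerm

variable {N : ℕ}

/-- The `r`-th face of the flag encoded by a signed permutation, with `r + 1` nonzero entries. -/
noncomputable def SignedPerm.face (s : SignedPerm N) (r : ℕ) : SignVector N :=
  fun i => if (s.1 i : ℕ) ≤ r then SignType.sign (s.2 i : ℤ) else 0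

lemma SignedPerm.face_ne_zero [NeZero N] (s : SignedPerm N) (r : ℕ) : s.face r ≠ 0 := by
  refine Function.ne_iff.2 ⟨s.1.symm 0, ?_⟩
  simp [face, sign_eq_zero_iff]

lemma SignedPerm.face_conforms (s : SignedPerm N) {r r' : ℕ} (h : r ≤ r') :
    Conforms (s.face r) (s.face r') := by
  intro i
  by_cases hi : (s.1 i : ℕ) ≤ r
  · exact .inr (by simp only [face, hi, hi.trans h, if_true])
  · exact .inl (if_neg hi)

/-- The signed permutations that only involve the first `k` coordinates. Their first `k` faces are
the maximal flags of the `k`-dimensional cross-polytope. -/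
def signedPermsBelow (N k : ℕ) : Finset (SignedPerm N) :=
  {s | ∀ i : Fin N, k ≤ (i : ℕ) → s.1 i = i ∧ s.2 i = 1}

lemma mem_signedPermsBelow {k : ℕ} {s : SignedPerm N} :
    s ∈ signedPermsBelow N k ↔ ∀ i : Fin N, k ≤ (i : ℕ) → s.1 i = i ∧ s.2 i = 1 := by
  simp [signedPermsBelow]

lemma lt_of_mem_signedPermsBelow {k : ℕ} {s : SignedPerm N} (hs : s ∈ signedPermsBelow N k)
    {i : Fin N} (hi : (s.1 i : ℕ) < k) : (i : ℕ) < k := by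
  by_contra! hki
  rw [(mem_signedPermsBelow.1 hs i hki).1] at hi
  omega

lemma signedPermsBelow_zero : signedPermsBelow N 0 = {1} := by
  ext s
  simp [mem_signedPermsBelow, Prod.ext_iff, Equiv.ext_iff, funext_iff, forall_and]

/-- The signed permutations whose first `k + 1` faces lie in the hemisphere where
coordinate `k` is not negative. -/
def hemisphere (k : Fin N) : Finset (SignedPerm N) :=
  {s ∈ signedPermsBelow N (k + 1) | s.2 k = 1}

/-- Changes the signs of the coordinates up to `k`. -/
def SignedPerm.antipode (k : Fin N) (s : SignedPerm N) : SignedPerm N :=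
  (s.1, fun i => if i ≤ k then -s.2 i else s.2 i)

lemma SignedPerm.antipode_antipode (k : Fin N) (s : SignedPerm N) :
    (s.antipode k).antipode k = s := by
  refine Prod.ext rfl (funext fun i => ?_)
  by_cases hi : i ≤ k <;> simp [antipode, hi]

lemma antipode_mem_signedPermsBelow {k : Fin N} {s : SignedPerm N}
    (hs : s ∈ signedPermsBelow N (k + 1)) : s.antipode k ∈ signedPermsBelow N (k + 1) := by
  rw [mem_signedPermsBelow] at hs ⊢
  intro i hi
  have hik : ¬ i ≤ k := by rw [Fin.le_def]; omega
  simpa only [SignedPerm.antipode, hik, if_false] using hs i hi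

lemma face_antipode {k : Fin N} {s : SignedPerm N} (hs : s ∈ signedPermsBelow N (k + 1)) {r : ℕ}
    (hr : r ≤ k) : (s.antipode k).face r = -s.face r := by
  funext i
  by_cases hi : (s.1 i : ℕ) ≤ r
  · have hik : i ≤ k := Nat.lt_succ_iff.1 (lt_of_mem_signedPermsBelow hs (by omega))
    simp [SignedPerm.face, SignedPerm.antipode, hi, hik, Left.sign_neg]
  · simp [SignedPerm.face, SignedPerm.antipode, hi]

end SignedPerm

section AntipodalColouring

variable {N : ℕ} (c : SignVector N → ZMod 2)

/-- The colours of the first `k` faces of the flag encoded by a signed permutation. -/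
noncomputable def flagColours (k : ℕ) (s : SignedPerm N) : Fin k → ZMod 2 := fun r => c (s.face r)

lemma flagColours_antipode [NeZero N] (hc : ∀ x ≠ 0, c (-x) = c x + 1) {k : Fin N}
    {s : SignedPerm N} (hs : s ∈ signedPermsBelow N (k + 1)) :
    flagColours c (k + 1) (s.antipode k) = fun r => flagColours c (k + 1) s r + 1 := by
  funext r
  rw [flagColours, face_antipode hs (Nat.lt_succ_iff.1 r.2), hc _ (s.face_ne_zero r)]
  rfl

lemma sum_signedPermsBelow_eq_sum_hemisphere [NeZero N] (hc : ∀ x ≠ 0, c (-x) = c x + 1)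
    (k : Fin N) :
    ∑ s ∈ signedPermsBelow N (k + 1), alternation 0 (flagColours c (k + 1) s) =
      ∑ s ∈ hemisphere k, (alternation 0 (flagColours c (k + 1) s) +
        alternation 1 (flagColours c (k + 1) s)) := by
  rw [Finset.sum_add_distrib, hemisphere,
    ← Finset.sum_filter_add_sum_filter_not (signedPermsBelow N (k + 1)) (fun s => s.2 k = 1)]
  congr 1
  have antipode_sign (s : SignedPerm N) : (s.antipode k).2 k = 1 ↔ ¬ s.2 k = 1 := by
    simp [SignedPerm.antipode, neg_eq_iff_eq_neg, ← Int.units_ne_iff_eq_neg]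
  refine Finset.sum_nbij' (SignedPerm.antipode k) (SignedPerm.antipode k) ?_ ?_
    (fun s _ => s.antipode_antipode k) (fun s _ => s.antipode_antipode k) ?_ <;>
    simp only [Finset.mem_filter] <;> rintro s ⟨hs, hsk⟩
  · exact ⟨antipode_mem_signedPermsBelow hs, (antipode_sign s).2 hsk⟩
  · exact ⟨antipode_mem_signedPermsBelow hs, fun h => (antipode_sign s).1 h hsk⟩
  · rw [flagColours_antipode c hc hs, ← zero_add (1 : ZMod 2), ← alternation_add_one]
    simp [add_assoc, CharTwo.add_self_eq_zero]

/-- Exchanges the coordinates filled in at times `r` and `r + 1`; this changes the `r`-th face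
of the flag only. -/
def SignedPerm.exchange (r : ℕ) (hr : r + 1 < N) (s : SignedPerm N) : SignedPerm N :=
  (Equiv.swap ⟨r, by omega⟩ ⟨r + 1, hr⟩ * s.1, s.2)

lemma SignedPerm.face_exchange {r q : ℕ} (hr : r + 1 < N) (s : SignedPerm N) (hq : q ≠ r) :
    (s.exchange r hr).face q = s.face q := by
  funext i
  have rank_le_iff (j : Fin N) :
      (Equiv.swap (⟨r, by omega⟩ : Fin N) ⟨r + 1, hr⟩ j : ℕ) ≤ q ↔ (j : ℕ) ≤ q := by
    rw [Equiv.swap_apply_def]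
    split_ifs <;> simp_all <;> omega
  simp only [face, exchange, Equiv.Perm.mul_apply, rank_le_iff]

lemma exchange_mem_hemisphere {k : Fin N} {r : ℕ} (hr : r < k) {s : SignedPerm N}
    (hs : s ∈ hemisphere k) : s.exchange r (by omega) ∈ hemisphere k := by
  simp only [hemisphere, Finset.mem_filter, mem_signedPermsBelow] at hs ⊢
  refine ⟨fun i hi => ⟨?_, (hs.1 i hi).2⟩, hs.2⟩
  rw [SignedPerm.exchange, Equiv.Perm.mul_apply, (hs.1 i hi).1]
  exact Equiv.swap_apply_of_ne_of_ne (Fin.ne_of_val_ne (by simp; omega))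
    (Fin.ne_of_val_ne (by simp; omega))

lemma sum_hemisphere_erase_castSucc (k : Fin N) (r : Fin k) :
    ∑ s ∈ hemisphere k,
      alternation 0 (flagColours c (k + 1) s ∘ Fin.succAbove r.castSucc) = 0 := by
  have hr : (r : ℕ) + 1 < N := by omega
  refine Finset.sum_involution (fun s _ => s.exchange r hr) (fun s _ => ?_) (fun s _ _ h => ?_)
    (fun s hs => exchange_mem_hemisphere r.2 hs) (fun s _ => ?_)
  · have same_colours : flagColours c (k + 1) (s.exchange r hr) ∘ Fin.succAbove r.castSucc =
        flagColours c (k + 1) s ∘ Fin.succAbove r.castSucc := by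
      funext q
      exact congrArg c (s.face_exchange hr
        fun h => Fin.succAbove_ne r.castSucc q (Fin.ext h))
    rw [same_colours, CharTwo.add_self_eq_zero]
  · have swap_eq_one := mul_eq_right.1 (congrArg Prod.fst h)
    simpa using Equiv.swap_eq_one_iff.1 swap_eq_one
  · exact Prod.ext (Equiv.swap_mul_self_mul _ _ _) rfl

/-- Changes the sign of the coordinate filled in at time `k`; this does not affect the faces
before the `k`-th. -/
def SignedPerm.flipAt (k : Fin N) (s : SignedPerm N) : SignedPerm N :=
  (s.1, Function.update s.2 (s.1.symm k) (-s.2 (s.1.symm k)))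

lemma SignedPerm.face_flipAt {k : Fin N} (s : SignedPerm N) {r : ℕ} (hr : r < k) :
    (s.flipAt k).face r = s.face r := by
  funext i
  by_cases hi : i = s.1.symm k
  · have hkr : ¬ (k : ℕ) ≤ r := by omega
    simp [face, flipAt, hi, hkr]
  · simp only [face, flipAt, Function.update_of_ne hi]

lemma filter_hemisphere_eq_signedPermsBelow (k : Fin N) :
    {s ∈ hemisphere k | s.1 k = k} = signedPermsBelow N k := by
  ext s
  simp only [hemisphere, Finset.mem_filter, mem_signedPermsBelow]
  refine ⟨fun ⟨⟨hs, hsign⟩, hfix⟩ i hi => ?_, fun hs => ?_⟩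
  · rcases hi.eq_or_lt with h | h
    · rw [← Fin.ext h]
      exact ⟨hfix, hsign⟩
    · exact hs i h
  · exact ⟨⟨fun i hi => hs i (by omega), (hs k le_rfl).2⟩, (hs k le_rfl).1⟩

lemma flipAt_mem_hemisphere {k : Fin N} {s : SignedPerm N} (hs : s ∈ hemisphere k)
    (hk : s.1 k ≠ k) : s.flipAt k ∈ hemisphere k := by
  simp only [hemisphere, Finset.mem_filter] at hs ⊢
  have flipped_lt : (s.1.symm k : ℕ) < k + 1 :=
    lt_of_mem_signedPermsBelow hs.1 (by simp)
  have flipped_ne : k ≠ s.1.symm k := fun h => hk (s.1.eq_symm_apply.1 h)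
  refine ⟨mem_signedPermsBelow.2 fun i hi => ?_, ?_⟩
  · have hne : i ≠ s.1.symm k := fun h => by rw [h] at hi; omega
    simpa only [SignedPerm.flipAt, Function.update_of_ne hne] using mem_signedPermsBelow.1 hs.1 i hi
  · simpa only [SignedPerm.flipAt, Function.update_of_ne flipped_ne] using hs.2

lemma sum_hemisphere_erase_last (k : Fin N) :
    ∑ s ∈ hemisphere k, alternation 0 (flagColours c k s) =
      ∑ s ∈ signedPermsBelow N k, alternation 0 (flagColours c k s) := by
  rw [← filter_hemisphere_eq_signedPermsBelow,
    ← Finset.sum_filter_add_sum_filter_not (hemisphere k) (fun s => s.1 k = k), add_eq_left]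
  refine Finset.sum_involution (fun s _ => s.flipAt k) (fun s _ => ?_) (fun s _ _ h => ?_)
    (fun s hs => ?_) (fun s _ => ?_)
  · have same_colours : flagColours c k (s.flipAt k) = flagColours c k s :=
      funext fun q => congrArg c (s.face_flipAt q.2)
    rw [same_colours, CharTwo.add_self_eq_zero]
  · have sign_eq_neg := congrFun (congrArg Prod.snd h) (s.1.symm k)
    simp [SignedPerm.flipAt] at sign_eq_neg
  · rw [Finset.mem_filter] at hs ⊢
    exact ⟨flipAt_mem_hemisphere hs.1 hs.2, hs.2⟩
  · simp [SignedPerm.flipAt]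

theorem sum_alternation_flagColours_succ [NeZero N] (hc : ∀ x ≠ 0, c (-x) = c x + 1) (k : Fin N) :
    ∑ s ∈ signedPermsBelow N (k + 1), alternation 0 (flagColours c (k + 1) s) =
      ∑ s ∈ signedPermsBelow N k, alternation 0 (flagColours c k s) := by
  have erase_last (s : SignedPerm N) :
      flagColours c (k + 1) s ∘ (Fin.last (k : ℕ)).succAbove = flagColours c k s := by
    rw [Fin.succAbove_last]
    rfl
  calc ∑ s ∈ signedPermsBelow N (k + 1), alternation 0 (flagColours c (k + 1) s)
      = ∑ s ∈ hemisphere k, ∑ r : Fin (k + 1),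
          alternation 0 (flagColours c (k + 1) s ∘ r.succAbove) := by
        simp only [sum_signedPermsBelow_eq_sum_hemisphere c hc k, sum_alternation_succAbove,
          zero_add]
    _ = ∑ r : Fin (k + 1), ∑ s ∈ hemisphere k,
          alternation 0 (flagColours c (k + 1) s ∘ r.succAbove) :=
        Finset.sum_comm
    _ = ∑ s ∈ hemisphere k, alternation 0 (flagColours c k s) := by
        simp only [Fin.sum_univ_castSucc, sum_hemisphere_erase_castSucc, Finset.sum_const_zero,
          zero_add, erase_last]
    _ = ∑ s ∈ signedPermsBelow N k, alternation 0 (flagColours c k s) :=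
        sum_hemisphere_erase_last c k

theorem sum_alternation_flagColours_eq_one [NeZero N] (hc : ∀ x ≠ 0, c (-x) = c x + 1) {k : ℕ}
    (hk : k ≤ N) : ∑ s ∈ signedPermsBelow N k, alternation 0 (flagColours c k s) = 1 := by
  induction k with
  | zero => simp [signedPermsBelow_zero, alternation]
  | succ k ih => exact (sum_alternation_flagColours_succ c hc ⟨k, hk⟩).trans (ih (by omega))

theorem exists_alternating_chain [NeZero N] (hc : ∀ x ≠ 0, c (-x) = c x + 1) :
    ∃ x : ℕ → SignVector N, (∀ r, x r ≠ 0) ∧ (∀ r, Conforms (x r) (x (r + 1))) ∧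
      ∀ r, r + 1 < N → c (x r) ≠ c (x (r + 1)) := by
  obtain ⟨s, -, hs⟩ := Finset.exists_ne_zero_of_sum_ne_zero
    ((sum_alternation_flagColours_eq_one c hc le_rfl).trans_ne one_ne_zero)
  refine ⟨s.face, s.face_ne_zero, fun r => s.face_conforms r.le_succ, fun r hr => ?_⟩
  rw [alternation_ne_zero_iff] at hs
  have colour_face (q : ℕ) (hq : q < N) : c (s.face q) = q := (hs ⟨q, hq⟩).trans (zero_add _)
  rw [colour_face r (by omega), colour_face (r + 1) hr, Nat.cast_succ]
  exact (by decide : ∀ a : ZMod 2, a ≠ a + 1) r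

theorem exists_le_rank_of_antipodal {M : ℕ} {σ : SignVector (M + 1) → SignType}
    (hσ_ne : ∀ x ≠ 0, σ x ≠ 0) (hσ_neg : ∀ x ≠ 0, σ (-x) = -σ x) {ρ : SignVector (M + 1) → ℕ}
    (hρ : ∀ x z, x ≠ 0 → Conforms x z → ρ z ≤ ρ x)
    (hσρ : ∀ x z, x ≠ 0 → Conforms x z → ρ x = ρ z → σ x = σ z) : ∃ x ≠ 0, M ≤ ρ x := by
  have colour_neg : ∀ u : SignType, u ≠ 0 →
      (if -u = 1 then 1 else 0 : ZMod 2) = (if u = 1 then 1 else 0) + 1 := by decide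
  obtain ⟨x, hx, hchain, halt⟩ := exists_alternating_chain (fun x => if σ x = 1 then 1 else 0)
    fun x hx => by simpa only [hσ_neg x hx] using colour_neg _ (hσ_ne x hx)
  have rank_add_le (r : ℕ) (hr : r ≤ M) : ρ (x r) + r ≤ ρ (x 0) := by
    induction r with
    | zero => rfl
    | succ r ih =>
      have rank_le := hρ _ _ (hx r) (hchain r)
      have rank_ne : ρ (x r) ≠ ρ (x (r + 1)) := fun h =>
        halt r (by omega) (by rw [hσρ _ _ (hx r) (hchain r) h])
      have := ih (by omega)
      omega
  exact ⟨x 0, hx 0, by have := rank_add_le M le_rfl; omega⟩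

end AntipodalColouring

section MaxCompletion

open Finset

variable {M : ℕ}

/-- The positions `i` such that the entries `i` and `i + 1` of a sign vector are different. -/
def signChanges (y : SignVector (M + 1)) : Finset (Fin M) := {i | y i.castSucc ≠ y i.succ}

lemma mem_signChanges {y : SignVector (M + 1)} {e : Fin M} :
    e ∈ signChanges y ↔ y e.castSucc ≠ y e.succ := by
  simp [signChanges]

lemma signChanges_neg (y : SignVector (M + 1)) : signChanges (-y) = signChanges y := by
  simp [signChanges]

/-- The number of zero entries of a sign vector. -/
def numZeros {N : ℕ} (x : SignVector N) : ℕ := #{i | x i = 0}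

/-- `y` has no zero entries, conforms with `x`, and has the maximal number of sign changes among
the sign vectors with these two properties. -/
structure IsMaxCompletion (x y : SignVector (M + 1)) : Prop where
  ne_zero : ∀ i, y i ≠ 0
  conforms : Conforms x y
  card_le : ∀ z : SignVector (M + 1), (∀ i, z i ≠ 0) → Conforms x z →
    #(signChanges z) ≤ #(signChanges y)

lemma exists_isMaxCompletion (x : SignVector (M + 1)) : ∃ y, IsMaxCompletion x y := by
  classical
  let completions : Finset (SignVector (M + 1)) := {y | (∀ i, y i ≠ 0) ∧ Conforms x y}
  have mem_completions {y} : y ∈ completions ↔ (∀ i, y i ≠ 0) ∧ Conforms x y := by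
    simp [completions]
  have fill_mem : (fun i => if x i = 0 then 1 else x i) ∈ completions := by
    refine mem_completions.2 ⟨fun i => ?_, fun i => ?_⟩ <;> by_cases hi : x i = 0 <;> simp [hi]
  obtain ⟨y, hy, hmax⟩ := exists_max_image completions (fun y => #(signChanges y)) ⟨_, fill_mem⟩
  rw [mem_completions] at hy
  exact ⟨y, hy.1, hy.2, fun z hz hxz => hmax z (mem_completions.2 ⟨hz, hxz⟩)⟩

lemma exists_not_castSucc_mem_iff_succ_mem {A : Finset (Fin (M + 1))} (hA : A.Nonempty)
    (hA' : A ≠ univ) : ∃ e : Fin M, ¬(e.castSucc ∈ A ↔ e.succ ∈ A) := by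
  by_contra! hconst
  have mem_iff (i : Fin (M + 1)) : i ∈ A ↔ 0 ∈ A := by
    induction i using Fin.induction with
    | zero => rfl
    | succ e ih => exact (hconst e).symm.trans ih
  obtain ⟨i, hi⟩ := hA
  exact hA' (eq_univ_of_forall fun j => (mem_iff j).2 ((mem_iff i).1 hi))

namespace IsMaxCompletion

variable {x y y' z : SignVector (M + 1)}

/-- Otherwise, changing the signs of `y` on `A` would only create sign changes. -/
lemma exists_mem_signChanges (hy : IsMaxCompletion x y) (hx : x ≠ 0)
    {A : Finset (Fin (M + 1))} (hA : A.Nonempty) (hxA : ∀ i ∈ A, x i = 0) :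
    ∃ e ∈ signChanges y, ¬(e.castSucc ∈ A ↔ e.succ ∈ A) := by
  by_contra! hnone
  have hA' : A ≠ univ := fun h => hx (funext fun i => hxA i (h ▸ mem_univ i))
  obtain ⟨e, he⟩ := exists_not_castSucc_mem_iff_succ_mem hA hA'
  let flipped : SignVector (M + 1) := fun i => if i ∈ A then -y i else y i
  have flipped_ne_zero (i) : flipped i ≠ 0 := by
    by_cases hi : i ∈ A <;> simp [flipped, hi, hy.ne_zero i]
  have conforms_flipped : Conforms x flipped := fun i => by
    by_cases hi : i ∈ A
    · exact .inl (hxA i hi)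
    · simpa [flipped, hi] using hy.conforms i
  have change_e : e ∈ signChanges flipped := by
    have hne := hy.ne_zero e.castSucc
    have eq_succ : y e.castSucc = y e.succ := by
      simpa [mem_signChanges] using mt (hnone e) he
    by_cases hA : e.succ ∈ A <;>
      simp_all [mem_signChanges, flipped, SignType.self_eq_neg_iff]
  have ssubset : signChanges y ⊂ signChanges flipped := by
    refine (Finset.ssubset_iff_of_subset fun d hd => ?_).2
      ⟨e, change_e, mt (hnone e) he⟩
    have := hnone d hd
    rw [mem_signChanges] at hd ⊢
    by_cases hA : d.succ ∈ A <;> simp_all [flipped]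
  exact (card_lt_card ssubset).not_ge (hy.card_le _ flipped_ne_zero conforms_flipped)

lemma mem_signChanges_of_forall_le (hy : IsMaxCompletion x y) (hx : x ≠ 0) {e : Fin M}
    (hxe : ∀ i ≤ e.castSucc, x i = 0) : e ∈ signChanges y := by
  obtain ⟨d, hd, hde⟩ := hy.exists_mem_signChanges hx (A := Iic e.castSucc) nonempty_Iic
    (by simpa using hxe)
  simp only [mem_Iic, Fin.le_def, Fin.val_castSucc, Fin.val_succ] at hde
  rwa [← (Fin.ext (by omega) : d = e)]

lemma apply_zero_eq (hy : IsMaxCompletion x y) (hy' : IsMaxCompletion x y') (hx : x ≠ 0) :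
    y 0 = y' 0 := by
  obtain ⟨i, hi, hmin⟩ := WellFounded.has_min wellFounded_lt {i | x i ≠ 0} (Function.ne_iff.1 hx)
  have zero_of_lt (j) (hj : j < i) : x j = 0 := by_contra fun h => hmin j h hj
  have propagate : ∀ a b a' b' : SignType, a ≠ 0 → b ≠ 0 → a' ≠ 0 →
      a ≠ b → a' ≠ b' → b = b' → a = a' := by decide
  have apply_zero_eq_of_le (j : Fin (M + 1)) (hj : j ≤ i) (hyj : y j = y' j) : y 0 = y' 0 := by
    induction j using Fin.induction with
    | zero => exact hyj
    | succ e ih =>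
      have hlt : e.castSucc < i := Fin.castSucc_lt_succ.trans_le hj
      have zeros (k) (hk : k ≤ e.castSucc) : x k = 0 := zero_of_lt k (hk.trans_lt hlt)
      exact ih hlt.le (propagate _ _ _ _ (hy.ne_zero _) (hy.ne_zero _) (hy'.ne_zero _)
        (mem_signChanges.1 (hy.mem_signChanges_of_forall_le hx zeros))
        (mem_signChanges.1 (hy'.mem_signChanges_of_forall_le hx zeros)) hyj)
  exact apply_zero_eq_of_le i le_rfl
    ((hy.conforms.apply_eq hi).trans (hy'.conforms.apply_eq hi).symm)

lemma numZeros_le (hy : IsMaxCompletion x y) (hx : x ≠ 0) :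
    numZeros x ≤ 2 * #(signChanges y) := by
  have zeros_subset : ({i | x i = 0} : Finset _) ⊆
      (signChanges y).image Fin.castSucc ∪ (signChanges y).image Fin.succ := by
    intro i hi
    obtain ⟨e, he, hei⟩ := hy.exists_mem_signChanges hx (singleton_nonempty i) (by simpa using hi)
    simp only [mem_singleton] at hei
    simp only [mem_union, mem_image]
    by_cases h : e.succ = i
    · exact .inr ⟨e, he, h⟩
    · exact .inl ⟨e, he, by tauto⟩
  calc numZeros x
      ≤ #((signChanges y).image Fin.castSucc ∪ (signChanges y).image Fin.succ) :=
        card_le_card zeros_subset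
    _ ≤ #((signChanges y).image Fin.castSucc) + #((signChanges y).image Fin.succ) :=
        card_union_le _ _
    _ ≤ #(signChanges y) + #(signChanges y) := add_le_add card_image_le card_image_le
    _ = 2 * #(signChanges y) := (two_mul _).symm

lemma neg (hy : IsMaxCompletion x y) : IsMaxCompletion (-x) (-y) where
  ne_zero i := by simpa using hy.ne_zero i
  conforms := hy.conforms.neg
  card_le z hz hxz := by
    rw [signChanges_neg, ← signChanges_neg z]
    exact hy.card_le _ (fun i => by simpa using hz i) (by simpa using hxz.neg)

lemma card_signChanges_le (hy : IsMaxCompletion x y) (hz : IsMaxCompletion z y')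
    (hxz : Conforms x z) : #(signChanges y') ≤ #(signChanges y) :=
  hy.card_le _ hz.ne_zero (hxz.trans hz.conforms)

lemma of_card_eq (hy : IsMaxCompletion x y) (hz : IsMaxCompletion z y') (hxz : Conforms x z)
    (hcard : #(signChanges y) = #(signChanges y')) : IsMaxCompletion x y' where
  ne_zero := hz.ne_zero
  conforms := hxz.trans hz.conforms
  card_le w hw hxw := (hy.card_le w hw hxw).trans_eq hcard

end IsMaxCompletion

/-- A completion of `x` with as many sign changes as possible. -/
noncomputable def maxCompletion (x : SignVector (M + 1)) : SignVector (M + 1) :=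
  (exists_isMaxCompletion x).choose

lemma isMaxCompletion_maxCompletion (x : SignVector (M + 1)) :
    IsMaxCompletion x (maxCompletion x) :=
  (exists_isMaxCompletion x).choose_spec

/-- The number of sign changes that can be obtained by filling in the zeros of `x`. -/
noncomputable def maxChanges (x : SignVector (M + 1)) : ℕ := #(signChanges (maxCompletion x))

lemma maxChanges_le (x : SignVector (M + 1)) : maxChanges x ≤ M :=
  (card_le_univ _).trans_eq (Fintype.card_fin M)

lemma maxChanges_anti {x z : SignVector (M + 1)} (hxz : Conforms x z) :
    maxChanges z ≤ maxChanges x :=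
  (isMaxCompletion_maxCompletion x).card_signChanges_le (isMaxCompletion_maxCompletion z) hxz

lemma maxChanges_neg (x : SignVector (M + 1)) : maxChanges (-x) = maxChanges x := by
  have hx := isMaxCompletion_maxCompletion x
  have hnx := isMaxCompletion_maxCompletion (-x)
  refine le_antisymm ?_ ?_
  · simpa only [maxChanges, signChanges_neg] using
      hx.neg.card_le _ hnx.ne_zero hnx.conforms
  · simpa only [maxChanges, signChanges_neg] using
      hnx.card_le _ hx.neg.ne_zero hx.neg.conforms

lemma maxCompletion_neg_zero {x : SignVector (M + 1)} (hx : x ≠ 0) :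
    maxCompletion (-x) 0 = -maxCompletion x 0 :=
  (isMaxCompletion_maxCompletion (-x)).apply_zero_eq (isMaxCompletion_maxCompletion x).neg
    fun h => hx (funext fun i => SignType.neg_eq_zero_iff.1 (congrFun h i))

lemma maxCompletion_zero_eq {x z : SignVector (M + 1)} (hx : x ≠ 0) (hxz : Conforms x z)
    (hcard : maxChanges x = maxChanges z) : maxCompletion x 0 = maxCompletion z 0 := by
  have hmax := isMaxCompletion_maxCompletion x
  exact hmax.apply_zero_eq (hmax.of_card_eq (isMaxCompletion_maxCompletion z) hxz hcard) hx

end MaxCompletion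

section SignedSum

open Finset

/-- The signed sum of the vectors `d i`, with the sign vector `x` as coefficients. -/
noncomputable def signedSum {N : ℕ} {ι : Type*} (d : Fin N → ι → ℝ) (x : SignVector N) (j : ι) :
    ℝ :=
  ∑ i, (x i : ℝ) * d i j

/-- The coordinates of the signed sum of vectors bounded by `δ` whose sign is not affected by
filling in the zeros of `x`. -/
def stableCoords {N : ℕ} {ι : Type*} (d : Fin N → ι → ℝ) (δ : ℝ) (x : SignVector N) : Set ι :=
  {j | δ * numZeros x < |signedSum d x j|}

variable {N : ℕ} {ι : Type*} {d : Fin N → ι → ℝ} {δ : ℝ} {x z : SignVector N} {j : ι}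

lemma numZeros_neg (x : SignVector N) : numZeros (-x) = numZeros x := by
  simp [numZeros]

lemma signedSum_neg (d : Fin N → ι → ℝ) (x : SignVector N) (j : ι) :
    signedSum d (-x) j = -signedSum d x j := by
  simp [signedSum]

lemma stableCoords_neg (x : SignVector N) : stableCoords d δ (-x) = stableCoords d δ x := by
  simp only [stableCoords, numZeros_neg, signedSum_neg, abs_neg]

lemma abs_coe_signType {u : SignType} (hu : u ≠ 0) : |(u : ℝ)| = 1 := by
  cases u <;> simp at hu ⊢

lemma abs_signedSum_sub_le (hd : ∀ i j, |d i j| ≤ δ) (hxz : Conforms x z) (j : ι) :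
    |signedSum d x j - signedSum d z j| ≤ δ * (numZeros x - numZeros z) := by
  have term_le (i : Fin N) : |(x i : ℝ) * d i j - z i * d i j| ≤
      δ * ((if x i = 0 then 1 else 0) - (if z i = 0 then 1 else 0)) := by
    by_cases hx : x i = 0
    · by_cases hz : z i = 0
      · simp [hx, hz]
      · simpa [hx, hz, abs_mul, abs_coe_signType] using hd i j
    · simp [hxz.apply_eq hx, hx]
  calc |signedSum d x j - signedSum d z j|
      = |∑ i, ((x i : ℝ) * d i j - z i * d i j)| := by rw [sum_sub_distrib]; rfl
    _ ≤ ∑ i, |(x i : ℝ) * d i j - z i * d i j| := abs_sum_le_sum_abs _ _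
    _ ≤ ∑ i, δ * ((if x i = 0 then 1 else 0) - (if z i = 0 then 1 else 0)) :=
        sum_le_sum fun i _ => term_le i
    _ = δ * (numZeros x - numZeros z) := by
        simp [← mul_sum, numZeros]

lemma stableCoords_subset (hd : ∀ i j, |d i j| ≤ δ) (hxz : Conforms x z) :
    stableCoords d δ x ⊆ stableCoords d δ z := by
  intro j hj
  have := abs_signedSum_sub_le hd hxz j
  have := abs_sub_abs_le_abs_sub (signedSum d x j) (signedSum d z j)
  simp only [stableCoords, Set.mem_ofPred_eq] at hj ⊢
  linarith

lemma sign_eq_sign_of_abs_sub_lt {a b : ℝ} (h : |a - b| < |a|) :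
    SignType.sign a = SignType.sign b := by
  rw [abs_lt] at h
  rcases lt_trichotomy a 0 with ha | rfl | ha
  · rw [abs_of_neg ha] at h
    rw [sign_neg ha, sign_neg (by linarith)]
  · simp only [abs_zero, neg_zero] at h
    linarith
  · rw [abs_of_pos ha] at h
    rw [sign_pos ha, sign_pos (by linarith)]

lemma sign_signedSum_eq (hd : ∀ i j, |d i j| ≤ δ) (hδ : 0 ≤ δ) (hxz : Conforms x z)
    (hj : j ∈ stableCoords d δ x) :
    SignType.sign (signedSum d x j) = SignType.sign (signedSum d z j) := by
  refine sign_eq_sign_of_abs_sub_lt (lt_of_le_of_lt ?_ hj)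
  calc |signedSum d x j - signedSum d z j|
      ≤ δ * (numZeros x - numZeros z) := abs_signedSum_sub_le hd hxz j
    _ ≤ δ * numZeros x := by gcongr; simp

lemma signedSum_ne_zero (hδ : 0 ≤ δ) (hj : j ∈ stableCoords d δ x) : signedSum d x j ≠ 0 :=
  abs_pos.1 (lt_of_le_of_lt (by positivity) hj)

lemma mem_stableCoords_of_lt {M : ℕ} {d : Fin (M + 1) → ι → ℝ} (hd : ∀ i j, |d i j| ≤ δ)
    {x : SignVector (M + 1)} (hx : x ≠ 0)
    (hj : 4 * maxChanges x * δ < |signedSum d (maxCompletion x) j|) : j ∈ stableCoords d δ x := by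
  have hδ : 0 ≤ δ := (abs_nonneg _).trans (hd 0 j)
  have hmax := isMaxCompletion_maxCompletion x
  have zeros_le : (numZeros x : ℝ) ≤ 2 * maxChanges x := by exact_mod_cast hmax.numZeros_le hx
  have dist_le : |signedSum d (maxCompletion x) j - signedSum d x j| ≤ δ * numZeros x := by
    rw [abs_sub_comm]
    exact (abs_signedSum_sub_le hd hmax.conforms j).trans (by gcongr; simp)
  have bound : δ * numZeros x ≤ δ * (2 * maxChanges x) := by gcongr
  have := abs_sub_abs_le_abs_sub (signedSum d (maxCompletion x) j) (signedSum d x j)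
  simp only [stableCoords, Set.mem_ofPred_eq]
  linarith

end SignedSum

section DiscreteHobbyRice

open Finset

variable {M n : ℕ} (d : Fin (M + 1) → Fin n → ℝ) (δ : ℝ)

/-- A rank function on sign vectors: the first stable coordinate if there is no completion with more
than `n` sign changes, and otherwise the predecessor of the maximal number of sign changes. If there
is no stable coordinate, then the infimum of the empty set makes the first one the last of all. -/
noncomputable def labelRank [NeZero n] (x : SignVector (M + 1)) : ℕ :=
  if maxChanges x ≤ n then (sInf (stableCoords d δ x) : Fin n) else maxChanges x - 1

/-- The sign that goes with the rank: that of the first stable coordinate, respectively the leading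
sign of a completion with the maximal number of sign changes. -/
noncomputable def labelSign [NeZero n] (x : SignVector (M + 1)) : SignType :=
  if maxChanges x ≤ n then SignType.sign (signedSum d x (sInf (stableCoords d δ x)))
  else maxCompletion x 0

variable [NeZero n]

lemma labelRank_lt (hnM : n ≤ M) (x : SignVector (M + 1)) : labelRank d δ x < M := by
  have := maxChanges_le x
  unfold labelRank
  split_ifs <;> omega

lemma labelSign_neg {x : SignVector (M + 1)} (hx : x ≠ 0) :
    labelSign d δ (-x) = -labelSign d δ x := by
  simp only [labelSign, maxChanges_neg, stableCoords_neg, signedSum_neg, Left.sign_neg,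
    maxCompletion_neg_zero hx]
  split_ifs <;> rfl

variable {d δ} {x z : SignVector (M + 1)}

lemma sInf_mem_stableCoords (hne : (stableCoords d δ x).Nonempty) :
    sInf (stableCoords d δ x) ∈ stableCoords d δ x :=
  hne.csInf_mem (Set.toFinite _)

lemma labelSign_ne_zero (hδ : 0 ≤ δ) (hne : maxChanges x ≤ n → (stableCoords d δ x).Nonempty) :
    labelSign d δ x ≠ 0 := by
  unfold labelSign
  split_ifs with hxn
  · exact sign_ne_zero.2 (signedSum_ne_zero hδ (sInf_mem_stableCoords (hne hxn)))
  · exact (isMaxCompletion_maxCompletion x).ne_zero 0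

lemma labelRank_anti (hd : ∀ i j, |d i j| ≤ δ) (hxz : Conforms x z) :
    labelRank d δ z ≤ labelRank d δ x := by
  have hchanges := maxChanges_anti hxz
  have hfirst : (sInf (stableCoords d δ z) : Fin n) ≤ sInf (stableCoords d δ x) :=
    sInf_le_sInf (stableCoords_subset hd hxz)
  rw [Fin.le_def] at hfirst
  unfold labelRank
  split_ifs <;> omega

lemma labelSign_eq_of_labelRank_eq (hd : ∀ i j, |d i j| ≤ δ) (hx : x ≠ 0)
    (hne : maxChanges x ≤ n → (stableCoords d δ x).Nonempty)
    (hxz : Conforms x z) (hrank : labelRank d δ x = labelRank d δ z) :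
    labelSign d δ x = labelSign d δ z := by
  have hchanges := maxChanges_anti hxz
  unfold labelRank at hrank
  unfold labelSign
  split_ifs at hrank ⊢ with hxn hzn hzn
  · have hδ : 0 ≤ δ := (abs_nonneg _).trans (hd 0 0)
    rw [← Fin.ext hrank]
    exact sign_signedSum_eq hd hδ hxz (sInf_mem_stableCoords (hne hxn))
  · omega
  · omega
  · exact maxCompletion_zero_eq hx hxz (by omega)

theorem exists_signChanges_le_abs_signedSum_le_of_neZero (hnM : n ≤ M) (hd : ∀ i j, |d i j| ≤ δ) :
    ∃ y : SignVector (M + 1), (∀ i, y i ≠ 0) ∧ #(signChanges y) ≤ n ∧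
      ∀ j, |signedSum d y j| ≤ 4 * n * δ := by
  by_contra! hlarge
  have hδ : 0 ≤ δ := (abs_nonneg _).trans (hd 0 0)
  have hne (x : SignVector (M + 1)) (hx : x ≠ 0) (hxn : maxChanges x ≤ n) :
      (stableCoords d δ x).Nonempty := by
    obtain ⟨j, hj⟩ := hlarge (maxCompletion x) (isMaxCompletion_maxCompletion x).ne_zero hxn
    exact ⟨j, mem_stableCoords_of_lt hd hx (lt_of_le_of_lt (by gcongr) hj)⟩
  obtain ⟨x, -, hrank⟩ := exists_le_rank_of_antipodal (σ := labelSign d δ) (ρ := labelRank d δ)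
    (fun x hx => labelSign_ne_zero hδ (hne x hx))
    (fun x hx => labelSign_neg d δ hx)
    (fun x z _ hxz => labelRank_anti hd hxz)
    (fun x z hx hxz => labelSign_eq_of_labelRank_eq hd hx (hne x hx) hxz)
  exact (labelRank_lt d δ hnM x).not_ge hrank

end DiscreteHobbyRice

open Finset in
theorem exists_signChanges_le_abs_signedSum_le {M n : ℕ} (hnM : n ≤ M) {δ : ℝ}
    {d : Fin (M + 1) → Fin n → ℝ} (hd : ∀ i j, |d i j| ≤ δ) :
    ∃ y : SignVector (M + 1), (∀ i, y i ≠ 0) ∧ #(signChanges y) ≤ n ∧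
      ∀ j, |signedSum d y j| ≤ 4 * n * δ := by
  rcases eq_zero_or_neZero n with rfl | _
  · exact ⟨1, fun _ => one_ne_zero, by simp [signChanges], fun j => j.elim0⟩
  · exact exists_signChanges_le_abs_signedSum_le_of_neZero hnM hd

section AlternatingSum

open Finset

/-- The alternating sum `∑ k ≤ n, (-1) ^ k • (g (t (k + 1)) - g (t k))` of the increments of `g`
along `t`. -/
def alternatingSum {α E : Type*} [AddCommGroup E] [Module ℝ E] (n : ℕ) (g : α → E) (t : ℕ → α) :
    E :=
  ∑ k ∈ range (n + 1), (-1 : ℝ) ^ k • (g (t (k + 1)) - g (t k))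

lemma alternatingSum_apply {α ι : Type*} (n : ℕ) (g : α → ι → ℝ) (t : ℕ → α) (j : ι) :
    alternatingSum n g t j = alternatingSum n (fun x => g x j) t := by
  simp [alternatingSum]

/-- The number of `i < m` with `c i < k`; for monotone `c`, the place in `0, …, m` where `c`
reaches the level `k`. -/
def levelStart (c : ℕ → ℕ) (m k : ℕ) : ℕ := #{i ∈ range m | c i < k}

variable {c : ℕ → ℕ} {m n : ℕ}

lemma levelStart_le (k : ℕ) : levelStart c m k ≤ m :=
  (card_filter_le _ _).trans_eq (card_range m)

lemma levelStart_mono : Monotone (levelStart c m) := fun _ _ h =>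
  card_le_card (monotone_filter_right _ fun _ _ hi => hi.trans_le h)

lemma levelStart_zero : levelStart c m 0 = 0 := by
  simp [levelStart]

lemma levelStart_eq_of_forall_lt {k : ℕ} (hc : ∀ i < m, c i < k) : levelStart c m k = m := by
  rw [levelStart, filter_true_of_mem fun i hi => hc i (mem_range.1 hi), card_range]

lemma lt_levelStart_iff (hc : Monotone c) {i k : ℕ} (hi : i < m) :
    i < levelStart c m k ↔ c i < k := by
  refine ⟨fun h => ?_, fun h => ?_⟩
  · by_contra! hk
    have subset : {l ∈ range m | c l < k} ⊆ range i := fun l hl =>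
      mem_range.2 (hc.reflect_lt ((mem_filter.1 hl).2.trans_le hk))
    exact h.not_ge ((card_le_card subset).trans_eq (card_range i))
  · have subset : range (i + 1) ⊆ {l ∈ range m | c l < k} := fun l hl => by
      rw [mem_range, Nat.lt_succ_iff] at hl
      exact mem_filter.2 ⟨mem_range.2 (hl.trans_lt hi), (hc hl).trans_lt h⟩
    exact (card_range (i + 1)).symm.trans_le (card_le_card subset)

lemma filter_eq_Ico_levelStart (hc : Monotone c) (k : ℕ) :
    {i ∈ range m | c i = k} = Ico (levelStart c m k) (levelStart c m (k + 1)) := by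
  ext i
  rw [mem_filter, mem_range, mem_Ico]
  by_cases hi : i < m
  · rw [lt_levelStart_iff hc hi, ← not_lt, lt_levelStart_iff hc hi]
    omega
  · have := levelStart_le (c := c) (m := m) (k + 1)
    omega

lemma sum_range_eq_alternatingSum {E : Type*} [AddCommGroup E] [Module ℝ E] (g : ℕ → E)
    (hc : Monotone c) (hcn : ∀ i < m, c i ≤ n) :
    ∑ i ∈ range m, (-1 : ℝ) ^ c i • (g (i + 1) - g i) = alternatingSum n g (levelStart c m) := by
  rw [← sum_fiberwise_of_maps_to (t := range (n + 1)) (g := c)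
    fun i hi => mem_range.2 (Nat.lt_succ_iff.2 (hcn i (mem_range.1 hi)))]
  refine sum_congr rfl fun k _ => ?_
  calc ∑ i ∈ range m with c i = k, (-1 : ℝ) ^ c i • (g (i + 1) - g i)
      = ∑ i ∈ range m with c i = k, (-1 : ℝ) ^ k • (g (i + 1) - g i) :=
        sum_congr rfl fun i hi => by rw [(mem_filter.1 hi).2]
    _ = (-1 : ℝ) ^ k • (g (levelStart c m (k + 1)) - g (levelStart c m k)) := by
        rw [← smul_sum, filter_eq_Ico_levelStart hc, sum_Ico_sub g (levelStart_mono k.le_succ)]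

/-- The number of sign changes of `y` before position `i`. -/
def changesBefore {M : ℕ} (y : SignVector (M + 1)) (i : ℕ) : ℕ :=
  #{e ∈ signChanges y | e.val < i}

variable {M : ℕ} {y : SignVector (M + 1)}

lemma changesBefore_mono : Monotone (changesBefore y) := fun _ _ h =>
  card_le_card (monotone_filter_right _ fun _ _ hi => hi.trans_le h)

lemma changesBefore_succ (e : Fin M) :
    changesBefore y (e + 1) = changesBefore y e + if e ∈ signChanges y then 1 else 0 := by
  have filter_eq : {d ∈ signChanges y | d.val < e.val + 1} =
      {d ∈ signChanges y | d.val < e.val} ∪ {d ∈ signChanges y | d = e} := by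
    rw [← filter_or]
    exact filter_congr fun d _ => by rw [Nat.lt_succ_iff_lt_or_eq, Fin.ext_iff]
  rw [changesBefore, filter_eq, card_union_of_disjoint, filter_eq', apply_ite card]
  · rfl
  · exact disjoint_filter.2 fun d _ hd hde => hd.ne (congrArg Fin.val hde)

lemma apply_eq_mul_neg_one_pow (hy : ∀ i, y i ≠ 0) (i : Fin (M + 1)) :
    y i = y 0 * (-1) ^ changesBefore y i := by
  induction i using Fin.induction with
  | zero => simp [changesBefore]
  | succ e ih =>
    have eq_neg : ∀ a b : SignType, a ≠ 0 → b ≠ 0 → a ≠ b → b = -a := by decide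
    rw [Fin.val_castSucc] at ih
    rw [Fin.val_succ, changesBefore_succ, pow_add, ← mul_assoc, ← ih]
    split_ifs with he
    · simpa using eq_neg _ _ (hy _) (hy _) (mem_signChanges.1 he)
    · simpa [mem_signChanges, eq_comm] using he

theorem exists_alternatingSum_norm_le {M n : ℕ} (hnM : n ≤ M) {δ : ℝ} {g : ℕ → Fin n → ℝ}
    (hg : ∀ i ≤ M, ‖g (i + 1) - g i‖ ≤ δ) :
    ∃ a : ℕ → ℕ, Monotone a ∧ a 0 = 0 ∧ a (n + 1) = M + 1 ∧ (∀ k, a k ≤ M + 1) ∧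
      ‖alternatingSum n g a‖ ≤ 4 * n * δ := by
  have hδ : 0 ≤ δ := (norm_nonneg _).trans (hg 0 M.zero_le)
  obtain ⟨y, hy, hchanges, hsum⟩ := exists_signChanges_le_abs_signedSum_le hnM
    (d := fun i => g (i + 1) - g i)
    fun i j => (norm_le_pi_norm _ j).trans (hg i (Nat.lt_succ_iff.1 i.2))
  have changesBefore_le (i : ℕ) : changesBefore y i ≤ n := (card_filter_le _ _).trans hchanges
  refine ⟨levelStart (changesBefore y) (M + 1), levelStart_mono, levelStart_zero,
    levelStart_eq_of_forall_lt fun i _ => Nat.lt_succ_iff.2 (changesBefore_le i), levelStart_le,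
    (pi_norm_le_iff_of_nonneg (by positivity)).2 fun j => (Real.norm_eq_abs _).trans_le ?_⟩
  have signedSum_eq : signedSum (fun i : Fin (M + 1) => g (i + 1) - g i) y j =
      y 0 * alternatingSum n g (levelStart (changesBefore y) (M + 1)) j := by
    rw [← sum_range_eq_alternatingSum g changesBefore_mono fun i _ => changesBefore_le i,
      sum_range, Finset.sum_apply, mul_sum]
    refine sum_congr rfl fun i _ => ?_
    rw [apply_eq_mul_neg_one_pow hy i]
    simp [mul_assoc]
  simpa only [signedSum_eq, abs_mul, abs_coe_signType (hy 0), one_mul] using hsum j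

end AlternatingSum

section Partitions

open Set

/-- The partitions `0 = t 0 ≤ t 1 ≤ ⋯ ≤ t (n + 1) = 1`, extended to monotone sequences
in `[0, 1]`. -/
def unitPartitions (n : ℕ) : Set (ℕ → ℝ) :=
  {t ∈ Icc 0 1 | Monotone t ∧ t 0 = 0 ∧ t (n + 1) = 1}

variable {n : ℕ}

lemma apply_mem_Icc_of_mem_unitPartitions {t : ℕ → ℝ} (ht : t ∈ unitPartitions n) (k : ℕ) :
    t k ∈ Icc 0 1 :=
  ⟨ht.1.1 k, ht.1.2 k⟩

lemma isCompact_unitPartitions : IsCompact (unitPartitions n) :=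
  isCompact_Icc.inter_right <| isClosed_monotone.inter <|
    (isClosed_eq (continuous_apply 0) continuous_const).inter
      (isClosed_eq (continuous_apply (n + 1)) continuous_const)

lemma continuousOn_alternatingSum {E : Type*} [NormedAddCommGroup E] [NormedSpace ℝ E] {F : ℝ → E}
    (hF : ContinuousOn F (Icc 0 1)) : ContinuousOn (alternatingSum n F) (unitPartitions n) := by
  have continuousOn_eval (k : ℕ) : ContinuousOn (fun t => F (t k)) (unitPartitions n) :=
    hF.comp (continuous_apply k).continuousOn fun t ht =>
      apply_mem_Icc_of_mem_unitPartitions ht k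
  exact continuousOn_finsetSum _ fun k _ =>
    ((continuousOn_eval (k + 1)).sub (continuousOn_eval k)).const_smul _

lemma exists_mem_unitPartitions_norm_le {F : ℝ → Fin n → ℝ} (hF : ContinuousOn F (Icc 0 1)) {ε : ℝ}
    (hε : 0 < ε) : ∃ t ∈ unitPartitions n, ‖alternatingSum n F t‖ ≤ ε := by
  obtain ⟨η, hη, hη_dist⟩ := Metric.uniformContinuousOn_iff_le.1
    (isCompact_Icc.uniformContinuousOn_of_continuous hF) (ε / (4 * n + 1)) (by positivity)
  obtain ⟨m, hm⟩ := exists_nat_one_div_lt hη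
  obtain ⟨M, hM_eq⟩ : ∃ M, M = m + n := ⟨_, rfl⟩
  have hM : (0 : ℝ) < M + 1 := by positivity
  have grid_mem {i : ℕ} (hi : i ≤ M + 1) : (i / (M + 1) : ℝ) ∈ Icc 0 1 :=
    ⟨by positivity, (div_le_one hM).2 (by exact_mod_cast hi)⟩
  have increment_le (i : ℕ) (hi : i ≤ M) :
      ‖F ((i + 1 : ℕ) / (M + 1)) - F (i / (M + 1))‖ ≤ ε / (4 * n + 1) := by
    rw [← dist_eq_norm]
    refine hη_dist _ (grid_mem (by omega)) _ (grid_mem (by omega)) ?_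
    have mesh_le : (1 : ℝ) / (M + 1) ≤ 1 / (m + 1) := by gcongr; omega
    rw [Real.dist_eq, ← sub_div, Nat.cast_succ, add_sub_cancel_left, abs_of_pos (by positivity)]
    exact mesh_le.trans hm.le
  obtain ⟨a, ha_mono, ha_zero, ha_last, ha_le, hnorm⟩ := exists_alternatingSum_norm_le
    (g := fun i : ℕ => F (i / (M + 1))) (show n ≤ M by omega) increment_le
  refine ⟨fun k => a k / (M + 1), ⟨⟨fun k => (grid_mem (ha_le k)).1,
    fun k => (grid_mem (ha_le k)).2⟩, fun k l hkl => ?_, ?_, ?_⟩, hnorm.trans ?_⟩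
  · have := ha_mono hkl
    dsimp only
    gcongr
  · simp [ha_zero]
  · simp [ha_last, hM.ne']
  · rw [mul_div_assoc', div_le_iff₀ (by positivity)]
    linarith

theorem exists_mem_unitPartitions_alternatingSum_eq_zero {F : ℝ → Fin n → ℝ}
    (hF : ContinuousOn F (Icc 0 1)) : ∃ t ∈ unitPartitions n, alternatingSum n F t = 0 := by
  obtain ⟨t₁, ht₁, -⟩ := exists_mem_unitPartitions_norm_le hF one_pos
  obtain ⟨t, ht, hmin⟩ := isCompact_unitPartitions.exists_isMinOn ⟨t₁, ht₁⟩
    (continuousOn_alternatingSum hF).norm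
  refine ⟨t, ht, norm_le_zero_iff.1 (le_of_forall_pos_le_add fun ε hε => ?_)⟩
  obtain ⟨t', ht', hsmall⟩ := exists_mem_unitPartitions_norm_le hF hε
  simpa using (hmin ht').trans hsmall

end Partitions

section StepFunction

open Set

/-- The step function with value `(-1) ^ k` on `[t k, t (k + 1))` for `k < n`, and `(-1) ^ n` from
`t n` on. -/
noncomputable def alternatingStep (n : ℕ) (t : ℕ → ℝ) (x : ℝ) : ℝ :=
  (-1) ^ ({k ∈ Finset.Icc 1 n | t k ≤ x} : Finset ℕ).card

variable {n : ℕ} {t : ℕ → ℝ}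

lemma alternatingStep_eq_of_forall {x : ℝ} {k : ℕ} (hk : k ≤ n)
    (h : ∀ l, 1 ≤ l → l ≤ n → (t l ≤ x ↔ l ≤ k)) : alternatingStep n t x = (-1) ^ k := by
  have filter_eq : ({l ∈ Finset.Icc 1 n | t l ≤ x} : Finset ℕ) = Finset.Icc 1 k := by
    ext l
    rw [Finset.mem_filter, Finset.mem_Icc, Finset.mem_Icc]
    constructor
    · rintro ⟨⟨h1, hn⟩, hx⟩
      exact ⟨h1, (h l h1 hn).1 hx⟩
    · rintro ⟨h1, hlk⟩
      exact ⟨⟨h1, hlk.trans hk⟩, (h l h1 (hlk.trans hk)).2 hlk⟩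
  rw [alternatingStep, filter_eq, Nat.card_Icc, Nat.add_sub_cancel]

lemma alternatingStep_eq_of_mem_Ico (ht : Monotone t) {k : ℕ} (hk : k ≤ n) {x : ℝ}
    (hx : x ∈ Ico (t k) (t (k + 1))) : alternatingStep n t x = (-1) ^ k :=
  alternatingStep_eq_of_forall hk fun _ _ _ =>
    ⟨fun hlx => Nat.lt_succ_iff.1 (ht.reflect_lt (hlx.trans_lt hx.2)),
      fun hlk => (ht hlk).trans hx.1⟩

lemma alternatingStep_eq_of_le (ht : Monotone t) {x : ℝ} (hx : t n ≤ x) :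
    alternatingStep n t x = (-1) ^ n :=
  alternatingStep_eq_of_forall le_rfl fun _ _ hl => iff_of_true ((ht hl).trans hx) hl

lemma integral_mul_alternatingStep {g : ℝ → ℝ} (hg : IntegrableOn g (Icc 0 1))
    (ht : t ∈ unitPartitions n) : ∫ x in (0 : ℝ)..1, g x * alternatingStep n t x =
      alternatingSum n (fun x => ∫ s in (0 : ℝ)..x, g s) t := by
  have hmem := apply_mem_Icc_of_mem_unitPartitions ht
  obtain ⟨-, hmono, hzero, hone⟩ := ht
  have intervalIntegrable {a b : ℝ} (ha : a ∈ Icc (0 : ℝ) 1) (hb : b ∈ Icc (0 : ℝ) 1) :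
      IntervalIntegrable g volume a b :=
    (hg.mono_set (uIcc_subset_Icc ha hb)).intervalIntegrable
  have eqOn (k : ℕ) (hk : k ≤ n) : EqOn (fun x => g x * (-1) ^ k)
      (fun x => g x * alternatingStep n t x) (Ioo (t k) (t (k + 1))) := fun x hx => by
    simp only [alternatingStep_eq_of_mem_Ico hmono hk (Ioo_subset_Ico_self hx)]
  have step_integrable (k : ℕ) (hk : k < n + 1) :
      IntervalIntegrable (fun x => g x * alternatingStep n t x) volume (t k) (t (k + 1)) :=
    ((intervalIntegrable (hmem k) (hmem (k + 1))).mul_const _).congr_uIoo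
      (by rw [uIoo_of_le (hmono k.le_succ)]; exact eqOn k (Nat.lt_succ_iff.1 hk))
  rw [← hzero, ← hone, ← intervalIntegral.sum_integral_adjacent_intervals step_integrable]
  refine Finset.sum_congr rfl fun k hk => ?_
  rw [← intervalIntegral.integral_congr_Ioo_of_le (hmono k.le_succ)
    (eqOn k (Nat.lt_succ_iff.1 (Finset.mem_range.1 hk))), intervalIntegral.integral_mul_const,
    hzero, intervalIntegral.integral_interval_sub_left, smul_eq_mul, mul_comm]
  · exact intervalIntegrable (by simp) (hmem _)
  · exact intervalIntegrable (by simp) (hmem _)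

end StepFunction

/-- **Hobby–Rice theorem.** Given integrable functions `f 1, …, f n` on `[0,1]`, there are
points `0 = t 0 ≤ t 1 ≤ … ≤ t (n+1) = 1` and a function `h : [0,1] → {±1}` with
`h x = (-1)^k` on `[t k, t (k+1))` and `h 1 = (-1)^n`, such that
`∫₀¹ f j · h = 0` for all `j`. -/
theorem hobby_rice (n : ℕ) (f : Fin n → ℝ → ℝ)
    (hf : ∀ j, IntegrableOn (f j) (Set.Icc 0 1)) :
    ∃ t : ℕ → ℝ, ∃ h : ℝ → ℝ,
      t 0 = 0 ∧ t (n + 1) = 1 ∧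
      (∀ k ≤ n, t k ≤ t (k + 1)) ∧
      (∀ k ≤ n, ∀ x ∈ Set.Ico (t k) (t (k + 1)), h x = (-1 : ℝ) ^ k) ∧
      h 1 = (-1 : ℝ) ^ n ∧
      ∀ j : Fin n, ∫ x in (0:ℝ)..1, f j x * h x = 0 := by
  have primitives_continuousOn :
      ContinuousOn (fun x j => ∫ s in (0 : ℝ)..x, f j s) (Set.Icc 0 1) := by
    simp only [← Set.uIcc_of_le (zero_le_one' ℝ)] at hf ⊢
    exact continuousOn_pi.2 fun j => intervalIntegral.continuousOn_primitive_interval (hf j)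
  obtain ⟨t, ht, hsum⟩ := exists_mem_unitPartitions_alternatingSum_eq_zero primitives_continuousOn
  have ⟨⟨_, le_one⟩, hmono, hzero, hone⟩ := ht
  refine ⟨t, alternatingStep n t, hzero, hone, fun k _ => hmono k.le_succ,
    fun k hk x hx => alternatingStep_eq_of_mem_Ico hmono hk hx,
    alternatingStep_eq_of_le hmono (le_one n), fun j => ?_⟩
  calc ∫ x in (0 : ℝ)..1, f j x * alternatingStep n t x
      = alternatingSum n (fun x => ∫ s in (0 : ℝ)..x, f j s) t :=
        integral_mul_alternatingStep (hf j) ht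
    _ = 0 := (alternatingSum_apply n _ t j).symm.trans (congrFun hsum j)
end

section
/- Let f_1, ..., f_n ∈ L^1([0,1]; ℂ). Then there exists a smooth function h : [0,1] → S^1 (where S^1 is the unit circle in ℂ) such that ∫_0^1 f_j(x) h(x) dx = 0 for all j = 1, ..., n. (Lazarev–Lieb theorem.) -/
open MeasureTheory

/-!
For a unitary `u` in a C⋆-algebra, `a ↦ u * exp (u⋆ a - (u⋆ a)⋆)` takes unitary values and has
derivative `a ↦ a - u a⋆ u` at `0`, with an error that is uniform in `u`. In the algebra of bounded
continuous functions take `u` to be the character `x ↦ exp (i L x)` and let `L → ∞`. With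
`T a = ∫ a f`, the Riemann–Lebesgue lemma gives `T u → 0` and `T (u a⋆ u) = T (a⋆ u²) → 0`, so that
`a ↦ T (u * exp (u⋆ a - (u⋆ a)⋆))` is a small perturbation of `T` near `0`, with a small value at
`0`. Composed with a linear section of `T` on its finite-dimensional range it is close to the
identity, hence has a zero, and the unitary function obtained there is as smooth as `u` and `a`.
-/

open Filter Metric Topology NormedSpace
open scoped ContDiff BoundedContinuousFunction NNReal

section ApproximateIdentity

variable {𝕜 : Type*} [NontriviallyNormedField 𝕜]

theorem exists_eq_zero_of_approximatesLinearOn_id {V : Type*} [NormedAddCommGroup V]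
    [NormedSpace 𝕜 V] [CompleteSpace V] {f : V → V} {b : V} {r : ℝ} {c : ℝ≥0}
    (hf : ApproximatesLinearOn f (ContinuousLinearMap.id 𝕜 V) (closedBall b r) c)
    (hr : 0 ≤ r) (hb : ‖f b‖ ≤ (1 - c) * r) :
    ∃ v, f v = 0 := by
  let idInverse : (ContinuousLinearMap.id 𝕜 V).NonlinearRightInverse :=
    { toFun := id, nnnorm := 1, bound' := by simp, right_inv' := fun _ ↦ rfl }
  obtain ⟨v, -, hv⟩ := hf.surjOn_closedBall_of_nonlinearRightInverse idInverse hr subset_rfl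
    (show (0 : V) ∈ _ by simpa [idInverse] using hb)
  exact ⟨v, hv⟩

theorem tendsto_norm_zero_of_forall_tendsto_apply [CompleteSpace 𝕜] {τ V F : Type*} {l : Filter τ}
    [NormedAddCommGroup V] [NormedSpace 𝕜 V] [FiniteDimensional 𝕜 V]
    [NormedAddCommGroup F] [NormedSpace 𝕜 F] {L : τ → V →L[𝕜] F}
    (hL : ∀ v, Tendsto (fun t ↦ L t v) l (𝓝 0)) :
    Tendsto (fun t ↦ ‖L t‖) l (𝓝 0) := by
  let basis := Module.finBasis 𝕜 V
  obtain ⟨C, -, hC⟩ := basis.exists_opNorm_le (F := F)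
  have hsum : Tendsto (fun t ↦ C * ∑ i, ‖L t (basis i)‖) l (𝓝 0) := by
    simpa using (tendsto_finsetSum _ fun i _ ↦ (hL (basis i)).norm).const_mul C
  refine squeeze_zero (fun t ↦ norm_nonneg _) (fun t ↦ hC (by positivity) fun i ↦ ?_) hsum
  exact Finset.single_le_sum (f := fun i ↦ ‖L t (basis i)‖) (fun _ _ ↦ norm_nonneg _)
    (Finset.mem_univ i)

theorem exists_section_map [CompleteSpace 𝕜] {A F : Type*}
    [NormedAddCommGroup A] [NormedSpace 𝕜 A]
    [NormedAddCommGroup F] [NormedSpace 𝕜 F] [FiniteDimensional 𝕜 F]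
    (T : A →L[𝕜] F) (S : Submodule 𝕜 A) :
    ∃ σ : S.map T.toLinearMap →L[𝕜] A, (∀ v, σ v ∈ S) ∧ ∀ v, T (σ v) = v := by
  obtain ⟨σ, hσ⟩ := (T.toLinearMap.submoduleMap S).exists_rightInverse_of_surjective
    (LinearMap.range_eq_top.2 (T.toLinearMap.submoduleMap_surjective S))
  exact ⟨S.subtypeL ∘L σ.toContinuousLinearMap, fun v ↦ (σ v).2,
    fun v ↦ congrArg Subtype.val (LinearMap.congr_fun hσ v)⟩

variable {τ A F : Type*} {l : Filter τ} [NormedAddCommGroup A] [NormedSpace 𝕜 A]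
  [NormedAddCommGroup F] [NormedSpace 𝕜 F]

theorem approximatesLinearOn_id_of_section {V : Submodule 𝕜 F} {T : A →L[𝕜] F} {N : A → A}
    {B : A →L[𝕜] A} {σ : V →L[𝕜] A} {Φ : V → V} {r : ℝ} {c : ℝ≥0}
    (hN : ApproximatesLinearOn N (1 - B) (closedBall 0 r) c)
    (hσ : ∀ v, T (σ v) = v) (hΦ : ∀ v, (Φ v : F) = T (N (σ v))) :
    ApproximatesLinearOn Φ (ContinuousLinearMap.id 𝕜 V) (σ ⁻¹' closedBall 0 r)
      (‖T‖₊ * ‖σ‖₊ * c + ‖T ∘L B ∘L σ‖₊) := by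
  intro u hu v hv
  have hsplit : ((Φ u - Φ v - (u - v) : V) : F) =
      T (N (σ u) - N (σ v) - (1 - B) (σ u - σ v)) - (T ∘L B ∘L σ) (u - v) := by
    simp only [AddSubgroupClass.coe_sub, hΦ, sub_apply, one_apply_eq_self, map_sub, hσ,
      ContinuousLinearMap.comp_apply]
    abel
  calc ‖Φ u - Φ v - (u - v)‖
      ≤ ‖T (N (σ u) - N (σ v) - (1 - B) (σ u - σ v))‖ + ‖(T ∘L B ∘L σ) (u - v)‖ := by
        rw [Submodule.coe_norm, hsplit]
        exact norm_sub_le _ _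
    _ ≤ ‖T‖ * (c * (‖σ‖ * ‖u - v‖)) + ‖T ∘L B ∘L σ‖ * ‖u - v‖ := by
        gcongr
        · refine T.le_opNorm_of_le ((hN (σ u) hu (σ v) hv).trans ?_)
          rw [← map_sub]
          gcongr
          exact σ.le_opNorm _
        · exact (T ∘L B ∘L σ).le_opNorm _
    _ = (‖T‖₊ * ‖σ‖₊ * c + ‖T ∘L B ∘L σ‖₊ : ℝ≥0) * ‖u - v‖ := by
        push_cast
        ring

theorem eventually_exists_mem_apply_eq_zero [CompleteSpace 𝕜] [FiniteDimensional 𝕜 F]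
    {T : A →L[𝕜] F} {S : Submodule 𝕜 A} {N : τ → A → A} {B : τ → A →L[𝕜] A}
    (hN : ∀ c : ℝ≥0, 0 < c → ∃ r > 0, ∀ t, ApproximatesLinearOn (N t) (1 - B t) (closedBall 0 r) c)
    (hNS : ∀ t, ∀ a ∈ S, N t a ∈ S)
    (hT : Tendsto (fun t ↦ T (N t 0)) l (𝓝 0))
    (hTB : ∀ a ∈ S, Tendsto (fun t ↦ T (B t a)) l (𝓝 0)) :
    ∀ᶠ t in l, ∃ a ∈ S, T (N t a) = 0 := by
  obtain ⟨σ, hσS, hσ⟩ := exists_section_map T S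
  obtain ⟨c, hc, hcT⟩ := exists_pos_mul_lt (show (0 : ℝ) < 1 / 4 by norm_num) (‖T‖ * ‖σ‖)
  lift c to ℝ≥0 using hc.le
  obtain ⟨r, hr, hNr⟩ := hN c (mod_cast hc)
  obtain ⟨ρ, hρ, hρσ⟩ := exists_pos_mul_lt hr ‖σ‖
  have hball : closedBall (0 : S.map T.toLinearMap) ρ ⊆ σ ⁻¹' closedBall 0 r := fun v hv ↦ by
    rw [mem_closedBall_zero_iff] at hv
    simpa using (σ.le_opNorm_of_le hv).trans hρσ.le
  have hTBσ : Tendsto (fun t ↦ ‖T ∘L B t ∘L σ‖) l (𝓝 0) :=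
    tendsto_norm_zero_of_forall_tendsto_apply fun v ↦ hTB _ (hσS v)
  filter_upwards [hT.norm.eventually_le_const (u := ρ / 2) (by simpa using hρ),
    hTBσ.eventually_le_const (u := 1 / 4) (by norm_num)] with t hTt hBt
  let Φ (v : S.map T.toLinearMap) : S.map T.toLinearMap :=
    ⟨T (N t (σ v)), Submodule.mem_map_of_mem (hNS t _ (hσS v))⟩
  have hΦ : ApproximatesLinearOn Φ (.id 𝕜 _) (closedBall 0 ρ) (1 / 2) := by
    refine ((approximatesLinearOn_id_of_section (hNr t) hσ fun _ ↦ rfl).mono_set hball).mono_num ?_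
    rw [← NNReal.coe_le_coe]
    push_cast
    linarith
  have hΦ_zero : ‖Φ 0‖ ≤ (1 - (1 / 2 : ℝ≥0)) * ρ := by
    have : (Φ 0 : F) = T (N t 0) := by simp only [Φ, map_zero]
    rw [Submodule.coe_norm, this]
    push_cast
    linarith
  have : CompleteSpace (S.map T.toLinearMap) := FiniteDimensional.complete 𝕜 _
  obtain ⟨v, hv⟩ := exists_eq_zero_of_approximatesLinearOn_id hΦ hρ.le hΦ_zero
  exact ⟨σ v, hσS v, congrArg Subtype.val hv⟩

end ApproximateIdentity

section UnitaryTwist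

section Ring

variable {A : Type*} [Ring A] [StarRing A]

/-- Twice the skew-adjoint part of `u⋆ a`: the infinitesimal rotation by which `unitaryTwist u a`
turns `u`. -/
def twistExponent (u a : A) : A :=
  star u * a - star (star u * a)

theorem twistExponent_mem_skewAdjoint (u a : A) : twistExponent u a ∈ skewAdjoint A := by
  simp [twistExponent, skewAdjoint.mem_iff]

theorem twistExponent_sub (u a b : A) :
    twistExponent u (a - b) = twistExponent u a - twistExponent u b := by
  simp only [twistExponent, mul_sub, star_sub]
  abel

theorem mul_twistExponent {u : A} (hu : u ∈ unitary A) (a : A) :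
    u * twistExponent u a = a - u * star a * u := by
  simp [twistExponent, mul_sub, ← mul_assoc, Unitary.mul_star_self_of_mem hu]

end Ring

variable {A : Type*} [NormedRing A] [StarRing A]

theorem norm_twistExponent_le [CStarRing A] {u : A} (hu : u ∈ unitary A) (a : A) :
    ‖twistExponent u a‖ ≤ 2 * ‖a‖ :=
  calc ‖twistExponent u a‖
      ≤ ‖star u * a‖ + ‖star (star u * a)‖ := norm_sub_le _ _
    _ = 2 * ‖a‖ := by
        rw [norm_star, CStarRing.norm_mem_unitary_mul _ (Unitary.star_mem hu), two_mul]

/-- A family of unitary elements parametrized by `a`, passing through the unitary element `u` at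
`a = 0`. -/
noncomputable def unitaryTwist (u a : A) : A :=
  u * exp (twistExponent u a)

theorem unitaryTwist_zero (u : A) : unitaryTwist u 0 = u := by
  simp [unitaryTwist, twistExponent]

variable [NormedAlgebra ℝ A] [CompleteSpace A]

theorem unitaryTwist_mem_unitary [ContinuousStar A] {u : A} (hu : u ∈ unitary A) (a : A) :
    unitaryTwist u a ∈ unitary A := by
  let +nondep : NormedAlgebra ℚ A := .restrictScalars ℚ ℝ A
  exact mul_mem hu (exp_mem_unitary_of_mem_skewAdjoint (twistExponent_mem_skewAdjoint u a))

variable [StarModule ℝ A]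

/-- The real-linear map `a ↦ u a⋆ u`; the derivative of `unitaryTwist u` at `0` is
`1 - mulStarMul u`. -/
noncomputable def mulStarMul [ContinuousStar A] (u : A) : A →L[ℝ] A :=
  ContinuousLinearMap.mulLeftRight ℝ A u u ∘L (starL' ℝ : A ≃L[ℝ] A).toContinuousLinearMap

variable [CStarRing A]

theorem exists_approximatesLinearOn_unitaryTwist {c : ℝ≥0} (hc : 0 < c) :
    ∃ r > 0, ∀ u ∈ unitary A,
      ApproximatesLinearOn (unitaryTwist u) (1 - mulStarMul u) (closedBall 0 r) c := by
  obtain ⟨s, hs, hexp⟩ :=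
    (hasStrictFDerivAt_exp_zero (𝕂 := ℝ) (𝔸 := A)).approximates_deriv_on_nhds
      (c := c / 2) (.inr (by positivity))
  obtain ⟨R, hR, hRs⟩ := nhds_basis_closedBall.mem_iff.1 hs
  refine ⟨R / 2, by positivity, fun u hu a ha b hb ↦ ?_⟩
  have hmem {x : A} (hx : x ∈ closedBall 0 (R / 2)) : twistExponent u x ∈ s := by
    rw [mem_closedBall_zero_iff] at hx
    exact hRs (mem_closedBall_zero_iff.2 (by linarith [norm_twistExponent_le hu x]))
  have hfactor : unitaryTwist u a - unitaryTwist u b - (1 - mulStarMul u) (a - b) =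
      u * (exp (twistExponent u a) - exp (twistExponent u b)
        - (twistExponent u a - twistExponent u b)) := by
    rw [← twistExponent_sub, mul_sub, mul_twistExponent hu, mul_sub]
    rfl
  calc ‖unitaryTwist u a - unitaryTwist u b - (1 - mulStarMul u) (a - b)‖
      = ‖exp (twistExponent u a) - exp (twistExponent u b)
          - (twistExponent u a - twistExponent u b)‖ := by
        rw [hfactor, CStarRing.norm_mem_unitary_mul _ hu]
    _ ≤ (c / 2 : ℝ≥0) * ‖twistExponent u a - twistExponent u b‖ := hexp _ (hmem ha) _ (hmem hb)
    _ ≤ (c / 2 : ℝ≥0) * (2 * ‖a - b‖) := by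
        rw [← twistExponent_sub]
        gcongr
        exact norm_twistExponent_le hu _
    _ = c * ‖a - b‖ := by
        push_cast
        ring

theorem eventually_exists_mem_apply_unitaryTwist_eq_zero
    {τ F : Type*} {l : Filter τ} [NormedAddCommGroup F] [NormedSpace ℝ F] [FiniteDimensional ℝ F]
    {T : A →L[ℝ] F} {S : Submodule ℝ A} {u : τ → A} (hu : ∀ t, u t ∈ unitary A)
    (huS : ∀ t, ∀ a ∈ S, unitaryTwist (u t) a ∈ S)
    (hTu : Tendsto (fun t ↦ T (u t)) l (𝓝 0))
    (hTuu : ∀ a ∈ S, Tendsto (fun t ↦ T (u t * star a * u t)) l (𝓝 0)) :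
    ∀ᶠ t in l, ∃ a ∈ S, T (unitaryTwist (u t) a) = 0 := by
  refine eventually_exists_mem_apply_eq_zero (B := fun t ↦ mulStarMul (u t))
    (fun c hc ↦ ?_) huS (by simpa only [unitaryTwist_zero] using hTu) hTuu
  obtain ⟨r, hr, happrox⟩ := exists_approximatesLinearOn_unitaryTwist (A := A) hc
  exact ⟨r, hr, fun t ↦ happrox _ (hu t)⟩

end UnitaryTwist

section BoundedFunctions

open BoundedContinuousFunction

variable {X : Type*} [TopologicalSpace X]

theorem mem_unitary_iff_norm_apply_eq_one {𝕜 : Type*} [RCLike 𝕜] {a : X →ᵇ 𝕜} :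
    a ∈ unitary (X →ᵇ 𝕜) ↔ ∀ x, ‖a x‖ = 1 := by
  have hpointwise (x : X) : star a x * a x = 1 ↔ ‖a x‖ = 1 := by
    rw [star_apply, RCLike.star_def, RCLike.conj_mul,
      ← pow_eq_one_iff_of_nonneg (norm_nonneg (a x)) two_ne_zero]
    norm_cast
  simp only [Unitary.mem_iff, mul_comm a, and_self, DFunLike.ext_iff, mul_apply, coe_one,
    Pi.one_apply, hpointwise]

theorem boundedContinuousFunction_exp_apply {R : Type*} [NormedRing R] [NormedAlgebra ℝ R]
    [CompleteSpace R] (a : X →ᵇ R) (x : X) : exp a x = exp (a x) := by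
  let evalHom : (X →ᵇ R) →+* R :=
    { toFun := fun b ↦ b x
      map_one' := rfl
      map_mul' := fun _ _ ↦ rfl
      map_zero' := rfl
      map_add' := fun _ _ ↦ rfl }
  let +nondep : NormedAlgebra ℚ (X →ᵇ R) := .restrictScalars ℚ ℝ _
  let +nondep : NormedAlgebra ℚ R := .restrictScalars ℚ ℝ _
  exact map_exp evalHom (evalCLM ℝ x).continuous a

theorem unitaryTwist_apply (u a : X →ᵇ ℂ) (x : X) :
    unitaryTwist u a x = u x * Complex.exp (star (u x) * a x - star (star (u x) * a x)) := by
  simp [unitaryTwist, boundedContinuousFunction_exp_apply, Complex.exp_eq_exp_ℂ, twistExponent]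

/-- Integration against a fixed integrable vector-valued function `f`, as a continuous linear map
`a ↦ ∫ x, a x • f x ∂μ` on bounded continuous functions. -/
noncomputable def integralSMul {F : Type*} [NormedAddCommGroup F] [NormedSpace ℂ F]
    [MeasurableSpace X] [OpensMeasurableSpace X] {μ : Measure X} {f : X → F} (hf : Integrable f μ) :
    (X →ᵇ ℂ) →L[ℂ] F :=
  have integrable_smul (a : X →ᵇ ℂ) : Integrable (fun x ↦ a x • f x) μ :=
    hf.bdd_smul ‖a‖ a.continuous.aestronglyMeasurable (.of_forall a.norm_coe_le_norm)
  LinearMap.mkContinuous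
    { toFun a := ∫ x, a x • f x ∂μ
      map_add' a b := by simp [add_smul, integral_add (integrable_smul a) (integrable_smul b)]
      map_smul' c a := by simp [mul_smul, integral_smul] }
    (∫ x, ‖f x‖ ∂μ) fun a ↦ by
      rw [mul_comm, ← integral_const_mul]
      refine norm_integral_le_of_norm_le (hf.norm.const_mul _) (.of_forall fun x ↦ ?_)
      rw [norm_smul]
      gcongr
      exact a.norm_coe_le_norm x

variable {E : Type*} [NormedAddCommGroup E] [NormedSpace ℝ E]

/-- The bounded continuous functions of class `C^n` over `𝕜`; here only the functions themselves,
and not their derivatives, are bounded. -/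
def contDiffSubmodule (𝕜 : Type*) [NontriviallyNormedField 𝕜] (n : ℕ∞ω) (E G : Type*)
    [NormedAddCommGroup E] [NormedSpace 𝕜 E] [NormedAddCommGroup G] [NormedSpace 𝕜 G] :
    Submodule 𝕜 (E →ᵇ G) where
  carrier := {a | ContDiff 𝕜 n a}
  add_mem' ha hb := ContDiff.add ha hb
  zero_mem' := contDiff_const
  smul_mem' _ _ ha := contDiff_const.smul ha

theorem unitaryTwist_mem_contDiffSubmodule {n : ℕ∞ω} {u a : E →ᵇ ℂ}
    (hu : u ∈ contDiffSubmodule ℝ n E ℂ) (ha : a ∈ contDiffSubmodule ℝ n E ℂ) :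
    unitaryTwist u a ∈ contDiffSubmodule ℝ n E ℂ := by
  have hexponent : ContDiff ℝ n fun x ↦ star (u x) * a x :=
    (Complex.conjCLE.contDiff.comp hu).mul ha
  have htwist : ContDiff ℝ n fun x ↦
      u x * Complex.exp (star (u x) * a x - star (star (u x) * a x)) :=
    hu.mul (hexponent.sub (Complex.conjCLE.contDiff.comp hexponent)).cexp
  rwa [← funext (unitaryTwist_apply u a)] at htwist

theorem probCharDual_mem_unitary (L : StrongDual ℝ E) : probCharDual L ∈ unitary (E →ᵇ ℂ) :=
  mem_unitary_iff_norm_apply_eq_one.2 fun x ↦ Complex.norm_exp_ofReal_mul_I (L x)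

theorem probCharDual_mem_contDiffSubmodule (n : ℕ∞ω) (L : StrongDual ℝ E) :
    probCharDual L ∈ contDiffSubmodule ℝ n E ℂ :=
  ((Complex.ofRealCLM.contDiff.comp L.contDiff).mul contDiff_const).cexp

theorem probCharDual_two_smul (L : StrongDual ℝ E) :
    probCharDual ((2 : ℝ) • L) = probCharDual L * probCharDual L := by
  rw [two_smul]
  exact char_add_eq_mul L L

variable [FiniteDimensional ℝ E] [MeasurableSpace E] [BorelSpace E] (μ : Measure E)
  [μ.IsAddHaarMeasure]

theorem tendsto_integral_probCharDual_smul {F : Type*} [NormedAddCommGroup F] [NormedSpace ℂ F]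
    (f : E → F) {c : ℝ} (hc : c ≠ 0) :
    Tendsto (fun L : StrongDual ℝ E ↦ ∫ x, probCharDual (c • L) x • f x ∂μ)
      (cocompact (StrongDual ℝ E)) (𝓝 0) := by
  have hscale : -(c / (2 * Real.pi)) ≠ 0 := by simp [hc, Real.pi_ne_zero]
  refine ((tendsto_integral_exp_smul_cocompact f μ).comp
    (Homeomorph.smulOfNeZero _ hscale).isClosedEmbedding.tendsto_cocompact).congr fun L ↦ ?_
  refine integral_congr_ae (.of_forall fun x ↦ ?_)
  have hphase : 2 * Real.pi * -((-(c / (2 * Real.pi)) • L) x) = (c • L) x := by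
    simp only [_root_.smul_apply, smul_eq_mul]
    field_simp
  have hchar : probCharDual (c • L) x = Real.fourierChar (-((-(c / (2 * Real.pi)) • L) x)) := by
    rw [probCharDual_apply, ← hphase, Real.fourierChar_apply]
  exact (congrArg (· • f x) hchar).symm

theorem exists_contDiff_norm_eq_one_integral_smul_eq_zero [Nontrivial E] {F : Type*}
    [NormedAddCommGroup F] [NormedSpace ℂ F] [FiniteDimensional ℂ F] {f : E → F}
    (hf : Integrable f μ) :
    ∃ h : E → ℂ, ContDiff ℝ ω h ∧ (∀ x, ‖h x‖ = 1) ∧ ∫ x, h x • f x ∂μ = 0 := by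
  have : FiniteDimensional ℝ F := .trans ℝ ℂ F
  have : NoncompactSpace (StrongDual ℝ E) := NormedSpace.noncompactSpace ℝ _
  let T : (E →ᵇ ℂ) →L[ℝ] F := (integralSMul hf).restrictScalars ℝ
  have hT (a) : T a = ∫ x, a x • f x ∂μ := rfl
  have hchar : Tendsto (fun L ↦ T (probCharDual L)) (cocompact (StrongDual ℝ E)) (𝓝 0) := by
    simpa only [hT, one_smul] using tendsto_integral_probCharDual_smul μ f one_ne_zero
  have hsquare (a : E →ᵇ ℂ) : Tendsto (fun L ↦ T (probCharDual L * star a * probCharDual L))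
      (cocompact (StrongDual ℝ E)) (𝓝 0) := by
    refine (tendsto_integral_probCharDual_smul μ (fun x ↦ star a x • f x) two_ne_zero).congr
      fun L ↦ integral_congr_ae (.of_forall fun x ↦ ?_)
    simp only [probCharDual_two_smul, mul_apply, smul_smul, mul_right_comm]
  obtain ⟨L, a, ha, hzero⟩ := (eventually_exists_mem_apply_unitaryTwist_eq_zero
    (S := contDiffSubmodule ℝ ω E ℂ) probCharDual_mem_unitary
    (fun L _ ↦ unitaryTwist_mem_contDiffSubmodule (probCharDual_mem_contDiffSubmodule ω L))
    hchar fun a _ ↦ hsquare a).exists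
  exact ⟨⇑(unitaryTwist (probCharDual L) a),
    unitaryTwist_mem_contDiffSubmodule (probCharDual_mem_contDiffSubmodule ω L) ha,
    mem_unitary_iff_norm_apply_eq_one.1 (unitaryTwist_mem_unitary (probCharDual_mem_unitary L) a),
    hzero⟩

end BoundedFunctions

theorem lazarev_lieb_general {E ι : Type*} [NormedAddCommGroup E] [NormedSpace ℝ E]
    [FiniteDimensional ℝ E] [Nontrivial E] [MeasurableSpace E] [BorelSpace E]
    (μ : Measure E) [μ.IsAddHaarMeasure] [Finite ι] {s : Set E} (hs : MeasurableSet s)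
    {f : ι → E → ℂ} (hf : ∀ j, IntegrableOn (f j) s μ) :
    ∃ h : E → ℂ, ContDiff ℝ ω h ∧ (∀ x, ‖h x‖ = 1) ∧ ∀ j, ∫ x in s, f j x * h x ∂μ = 0 := by
  have := Fintype.ofFinite ι
  let g : E → ι → ℂ := fun x j ↦ s.indicator (f j) x
  have hg (j) : Integrable (fun x ↦ g x j) μ := (hf j).integrable_indicator hs
  obtain ⟨h, hanalytic, hnorm, hzero⟩ :=
    exists_contDiff_norm_eq_one_integral_smul_eq_zero μ (.of_eval hg)
  have hhg (j) : Integrable (fun x ↦ (h x • g x) j) μ :=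
    (hg j).bdd_mul (c := 1) hanalytic.continuous.aestronglyMeasurable
      (.of_forall fun x ↦ (hnorm x).le)
  refine ⟨h, hanalytic, hnorm, fun j ↦ ?_⟩
  calc ∫ x in s, f j x * h x ∂μ
      = ∫ x, (h x • g x) j ∂μ := by
        rw [← integral_indicator hs]
        simp only [Set.indicator_mul_left, Pi.smul_apply, smul_eq_mul, mul_comm, g]
    _ = (∫ x, h x • g x ∂μ) j := (eval_integral hhg j).symm
    _ = 0 := by rw [hzero, Pi.zero_apply]

/-- **Lazarev–Lieb theorem.** Given integrable complex-valued functions `f 1, …, f n` on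
`[0,1]`, there is a smooth function `h : [0,1] → S¹` (i.e. smooth on `[0,1]` with values in
the unit circle) such that `∫₀¹ f j · h = 0` for all `j`. -/
theorem lazarev_lieb (n : ℕ) (f : Fin n → ℝ → ℂ)
    (hf : ∀ j, IntegrableOn (f j) (Set.Icc 0 1)) :
    ∃ h : ℝ → ℂ,
      ContDiffOn ℝ (⊤ : ℕ∞) h (Set.Icc 0 1) ∧
      (∀ x ∈ Set.Icc (0:ℝ) 1, ‖h x‖ = 1) ∧
      ∀ j : Fin n, ∫ x in (0:ℝ)..1, f j x * h x = 0 := by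
  obtain ⟨h, hanalytic, hnorm, hzero⟩ := lazarev_lieb_general volume measurableSet_Icc hf
  refine ⟨h, (hanalytic.of_le le_top).contDiffOn, fun x _ ↦ hnorm x, fun j ↦ ?_⟩
  rw [intervalIntegral.integral_of_le zero_le_one, ← integral_Icc_eq_integral_Ioc, hzero j]
end
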